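/- If C is an n×n reciprocal pairwise comparison matrix with Koczkodaj inconsistency index KI(C), and κ = 1 − KI(C), then for all indices i, j, k it holds that κ·c_{ik}·c_{kj} ≤ c_{ij} ≤ (1/κ)·c_{ik}·c_{kj}. -/

import Mathlib

open Finset

noncomputable def KI {n : ℕ} (C : Matrix (Fin n) (Fin n) ℝ) : ℝ :=
  ⨆ i : Fin n, ⨆ j : Fin n, ⨆ k : Fin n,
    min |1 - C i j / (C i k * C k j)| |1 - (C i k * C k j) / C i j|

/-!
Of two mutually inverse positive ratios, the one below `1` deviates less from `1`. The smaller
deviation of a triad is therefore one minus its smaller ratio, and `1 - KI C` is a lower bound for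
both ratios between `C i j` and `C i k * C k j`.
-/

theorem min_abs_one_sub_div {𝕜 : Type*} [Field 𝕜] [LinearOrder 𝕜] [IsStrictOrderedRing 𝕜]
    {x y : 𝕜} (hx : 0 < x) (hy : 0 < y) :
    min |1 - x / y| |1 - y / x| = 1 - min (x / y) (y / x) := by
  wlog hxy : x ≤ y generalizing x y
  · simpa only [min_comm] using this hy hx (le_of_not_ge hxy)
  have hle_one : x / y ≤ 1 := (div_le_one hy).mpr hxy
  have hone_le : 1 ≤ y / x := (one_le_div hx).mpr hxy
  have hdeviation : 1 - x / y ≤ y / x - 1 :=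
    calc 1 - x / y = (y - x) / y := by rw [sub_div, div_self hy.ne']
      _ ≤ (y - x) / x := div_le_div_of_nonneg_left (sub_nonneg.mpr hxy) hx hxy
      _ = y / x - 1 := by rw [sub_div, div_self hx.ne']
  rw [abs_of_nonneg (sub_nonneg.mpr hle_one), abs_sub_comm, abs_of_nonneg (sub_nonneg.mpr hone_le),
    min_eq_left hdeviation, min_eq_left (hle_one.trans hone_le)]

theorem min_abs_one_sub_div_le_KI {n : ℕ} (C : Matrix (Fin n) (Fin n) ℝ) (i j k : Fin n) :
    min |1 - C i j / (C i k * C k j)| |1 - (C i k * C k j) / C i j| ≤ KI C :=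
  Finite.le_ciSup_of_le i <| Finite.le_ciSup_of_le j <| Finite.le_ciSup_of_le k le_rfl

theorem triad_bound_general {n : ℕ} (C : Matrix (Fin n) (Fin n) ℝ) (hpos : ∀ i j, 0 < C i j)
    (i j k : Fin n) :
    (1 - KI C) * (C i k * C k j) ≤ C i j ∧ (1 - KI C) * C i j ≤ C i k * C k j := by
  have hij : 0 < C i j := hpos i j
  have hikj : 0 < C i k * C k j := mul_pos (hpos i k) (hpos k j)
  have hratio : 1 - KI C ≤ min (C i j / (C i k * C k j)) (C i k * C k j / C i j) := by
    rw [sub_le_comm, ← min_abs_one_sub_div hij hikj]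
    exact min_abs_one_sub_div_le_KI C i j k
  rwa [le_min_iff, le_div_iff₀ hikj, le_div_iff₀ hij] at hratio

theorem triad_bound {n : ℕ} (hn : 2 < n) (C : Matrix (Fin n) (Fin n) ℝ)
    (hpos : ∀ i j, 0 < C i j) (hdiag : ∀ i, C i i = 1)
    (hrec : ∀ i j, C i j * C j i = 1)
    (κ : ℝ) (hκ : κ = 1 - KI C) (hκpos : 0 < κ) :
    ∀ i j k : Fin n, κ * (C i k * C k j) ≤ C i j ∧ C i j ≤ κ⁻¹ * (C i k * C k j) := by
  intro i j k
  rw [le_inv_mul_iff₀ hκpos, hκ]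
  exact triad_bound_general C hpos i j k
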